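/- arXiv:math/9904187 — 12 statements merged into one kernel-verified Lean document; each statement's English description precedes it below -/
import Mathlib

section
/- Let K be a field of characteristic zero and ε ∈ K an element such that 1 + ε·n ≠ 0 for every integer n. Define f : ℤ × ℤ → K by f(p,q) = −q(1 + εq)/(1 + ε(p+q)) (integers coerced into K). Then f satisfies the quasiassociativity functional equation [f(p,q) − f(q,p)]·f(p+q, r) = f(q,r)·f(p, q+r) − f(p,r)·f(q, p+r) for all p, q, r ∈ ℤ. -/
/-- The structure function `f(p,q) = -q(1+εq)/(1+ε(p+q))`. -/
noncomputable def virasoroF {K : Type*} [Field K] (ε : K) (p q : ℤ) : K :=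
  -((q : K) * (1 + ε * (q : K))) / (1 + ε * ((p : K) + (q : K)))

/-- `f` satisfies the quasiassociativity functional equation. -/
theorem stmt1 {K : Type*} [Field K] [CharZero K] (ε : K)
    (hε : ∀ n : ℤ, (1 : K) + ε * (n : K) ≠ 0) :
    ∀ p q r : ℤ,
      (virasoroF ε p q - virasoroF ε q p) * virasoroF ε (p + q) r
        = virasoroF ε q r * virasoroF ε p (q + r)
          - virasoroF ε p r * virasoroF ε q (p + r) := by
  intro p q r
  have h1 := hε (p + q)
  have h2 := hε (q + r)
  have h3 := hε (p + r)
  have h4 := hε (p + q + r)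
  push_cast at h1 h2 h3 h4
  have e1 : virasoroF ε p q - virasoroF ε q p = (p : K) - q := by
    unfold virasoroF
    rw [add_comm (q : K) (p : K), ← sub_div, div_eq_iff h1]
    ring
  have e2 : ∀ a b : ℤ, a + b = p + q → virasoroF ε b r * virasoroF ε a (b + r)
      = (r * (1 + ε * r)) * (b + r) / (1 + ε * ((p : K) + q + r)) := by
    intro a b hab
    have h5 := hε (b + r)
    have hab' : (p : K) + q = a + b := by exact_mod_cast hab.symm
    rw [hab'] at h4 ⊢
    have h6 : (1 : K) + ε * (a + (b + r)) ≠ 0 := by rwa [← add_assoc]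
    unfold virasoroF
    push_cast at h5 ⊢
    rw [← add_assoc (a : K), div_mul_div_comm, div_eq_div_iff (mul_ne_zero h5 h4) h4]
    ring
  rw [e1, e2 p q rfl, e2 q p (add_comm _ _), ← sub_div]
  unfold virasoroF
  push_cast
  rw [← mul_div_assoc]
  congr 1
  ring
end

section
/- Let K be a commutative ring, R a quasiassociative algebra over K, and Ω : R × R → K a K-bilinear form satisfying Ω(b, a*c) − Ω(a, b*c) + Ω([a,b], c) = 0 for all a, b, c ∈ R, where [a,b] = a*b − b*a. Then ω(a,b) := Ω(a,b) − Ω(b,a) is skew-symmetric and satisfies the Lie 2-cocycle identity ω([a,b], c) + ω([b,c], a) + ω([c,a], b) = 0 on the Lie algebra Lie(R); hence ω defines a central extension of Lie(R). -/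
/-- if `Ω` satisfies the quasiassociative 2-cocycle condition on a
quasiassociative algebra `R`, then `ω(a,b) = Ω(a,b) − Ω(b,a)` is skew-symmetric and is a
Lie 2-cocycle on `Lie(R)` (bracket `[a,b] = a*b − b*a`). -/
theorem stmt4 {K R : Type*} [CommRing K] [AddCommGroup R] [Module K R]
    (mul : R →ₗ[K] R →ₗ[K] R)
    (hquasi : ∀ a b c : R,
      mul a (mul b c) - mul (mul a b) c = mul b (mul a c) - mul (mul b a) c)
    (Ω : R →ₗ[K] R →ₗ[K] K)
    (hΩ : ∀ a b c : R,
      Ω b (mul a c) - Ω a (mul b c) + Ω (mul a b - mul b a) c = 0) :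
    (∀ a b : R, Ω a b - Ω b a = -(Ω b a - Ω a b)) ∧
    (∀ a b c : R,
      (Ω (mul a b - mul b a) c - Ω c (mul a b - mul b a)) +
      (Ω (mul b c - mul c b) a - Ω a (mul b c - mul c b)) +
      (Ω (mul c a - mul a c) b - Ω b (mul c a - mul a c)) = 0) := by
  refine ⟨fun a b => by ring, fun a b c => ?_⟩
  have h1 := hΩ a b c
  have h2 := hΩ b c a
  have h3 := hΩ c a b
  rw [map_sub (Ω c), map_sub (Ω a), map_sub (Ω b)]
  linear_combination h1 + h2 + h3
end

section
/- Let K be a field of characteristic zero and ε ∈ K an invertible element such that 1 + ε·n ≠ 0 for every integer n. Define f : ℤ × ℤ → K by f(p,q) = −q(1 + εq)/(1 + ε(p+q)) and φ : ℤ → K by φ(p) = (1/2)(p³ − p + (ε − ε⁻¹)p²). Then for all p, q ∈ ℤ: (p − q)·φ(p+q) = φ(p)·f(q, −p−q) − φ(q)·f(p, −p−q); moreover φ(p) − φ(−p) = p³ − p. Consequently Ω(e_p, e_q) = φ(p)δ⁰_{p+q} is a quasiassociative 2-cocycle for the multiplication e_p * e_q = f(p,q) e_{p+q}, and its skew-symmetrization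 is the Virasoro 2-cocycle (p³ − p)δ⁰_{p+q}. -/
/-- `φ(p) = (1/2)(p³ − p + (ε − ε⁻¹)p²)`. -/
noncomputable def virasoroPhi {K : Type*} [Field K] (ε : K) (p : ℤ) : K :=
  (1 / 2 : K) * ((p : K) ^ 3 - (p : K) + (ε - ε⁻¹) * (p : K) ^ 2)

/-- `(p − q)φ(p+q) = φ(p)f(q, −p−q) − φ(q)f(p, −p−q)` and
`φ(p) − φ(−p) = p³ − p`; consequently `Ω(e_p, e_q) = φ(p)δ⁰_{p+q}` is a quasiassociative
2-cocycle for the multiplication `e_p * e_q = f(p,q) e_{p+q}`, and its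
skew-symmetrization is the Virasoro 2-cocycle `(p³ − p)δ⁰_{p+q}`. -/
theorem stmt7 {K : Type*} [Field K] [CharZero K] (ε : K) (hε0 : ε ≠ 0)
    (hε : ∀ n : ℤ, (1 : K) + ε * (n : K) ≠ 0) :
    (∀ p q : ℤ,
      ((p : K) - (q : K)) * virasoroPhi ε (p + q)
        = virasoroPhi ε p * virasoroF ε q (-p - q)
          - virasoroPhi ε q * virasoroF ε p (-p - q)) ∧
    (∀ p : ℤ, virasoroPhi ε p - virasoroPhi ε (-p) = (p : K) ^ 3 - (p : K)) ∧
    (∀ p q r : ℤ,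
      virasoroF ε p r * (if q + (p + r) = 0 then virasoroPhi ε q else 0)
        - virasoroF ε q r * (if p + (q + r) = 0 then virasoroPhi ε p else 0)
        + ((p : K) - (q : K)) * (if (p + q) + r = 0 then virasoroPhi ε (p + q) else 0)
      = 0) ∧
    (∀ p q : ℤ,
      (if p + q = 0 then virasoroPhi ε p - virasoroPhi ε q else 0)
        = if p + q = 0 then (p : K) ^ 3 - (p : K) else 0) := by
  have h2 : (2 : K) ≠ 0 := two_ne_zero
  have key : ∀ p : ℤ, virasoroPhi ε p
      = (p : K) * ((p : K) + ε) * (ε * (p : K) - 1) / (2 * ε) := by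
    intro p
    unfold virasoroPhi
    field_simp
    ring
  have prod : ∀ p q : ℤ, virasoroPhi ε p * virasoroF ε q (-p - q)
      = -((p : K) * ((p : K) + ε) * ((p : K) + q) * (1 - ε * ((p : K) + q))) / (2 * ε) := by
    intro p q
    have hp : (1 : K) - ε * (p : K) ≠ 0 := by
      have := hε (-p)
      push_cast at this
      intro h
      apply this
      rw [← h]
      ring
    have hF : virasoroF ε q (-p - q)
        = (((p : K) + q) * (1 - ε * ((p : K) + q))) / (1 - ε * (p : K)) := by
      unfold virasoroF
      push_cast
      congr 1 <;> ring
    rw [key, hF, div_mul_div_comm, div_eq_div_iff (mul_ne_zero (mul_ne_zero h2 hε0) hp)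
      (mul_ne_zero h2 hε0)]
    ring
  have A : ∀ p q : ℤ,
      ((p : K) - (q : K)) * virasoroPhi ε (p + q)
        = virasoroPhi ε p * virasoroF ε q (-p - q)
          - virasoroPhi ε q * virasoroF ε p (-p - q) := by
    intro p q
    have h := prod q p
    rw [show -q - p = -p - q by ring] at h
    rw [prod, h, key]
    push_cast
    field_simp
    ring
  have B : ∀ p : ℤ, virasoroPhi ε p - virasoroPhi ε (-p) = (p : K) ^ 3 - (p : K) := by
    intro p
    unfold virasoroPhi
    push_cast
    ring
  refine ⟨A, B, ?_, ?_⟩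
  · intro p q r
    by_cases h : p + q + r = 0
    · rw [if_pos (by omega), if_pos (by omega), if_pos h]
      obtain rfl : r = -p - q := by omega
      linear_combination A p q
    · rw [if_neg (by omega), if_neg (by omega), if_neg h]
      ring
  · intro p q
    split_ifs with h
    · obtain rfl : q = -p := by omega
      exact B p
    · rfl
end

section
/- Let K be a commutative ring, R a quasiassociative algebra over K, M a K-module, and δ the coboundary on cochains Cⁿ = Hom_K(R^⊗n, M) defined by δψ(a₁,…,aₙ,a) = Σ_{i=1}^{n} (−1)^{i+1} ψ(a₁,…,âᵢ,…,aₙ, aᵢ*a) + Σ_{1≤i<j≤n} (−1)^{i+j+1} ψ([aᵢ,aⱼ], a₁,…,âᵢ,…,âⱼ,…,aₙ, a), with [a,b] = a*b − b*a. Then δ(δψ) = 0 for every ψ ∈ C² and for every ψ ∈ Cⁿ, n ≥ 3, that is antisymmetric in its first two arguments. -/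
/-- The quasiassociative coboundary `δ : Cⁿ → Cⁿ⁺¹` (here `n = m + 2 ≥ 2`),
`δψ(a₁,…,aₙ,a) = Σᵢ (−1)^{i+1} ψ(…,âᵢ,…, aᵢ*a)
  + Σ_{i<j} (−1)^{i+j+1} ψ([aᵢ,aⱼ], …,âᵢ,…,âⱼ,…, a)`,
with `[a,b] = a*b − b*a`, written 0-indexed: the argument vector is
`v : Fin (m+3) → R` with `a = v (Fin.last (m+2))`, and the omission of indices is
realized via `Fin.succAbove`. -/
noncomputable def qDelta {K R M : Type*} [CommRing K] [AddCommGroup R] [Module K R]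
    [AddCommGroup M]
    (mul : R →ₗ[K] R →ₗ[K] R) {m : ℕ}
    (ψ : (Fin (m + 2) → R) → M) : (Fin (m + 3) → R) → M :=
  fun v =>
    (∑ i : Fin (m + 2), ((-1 : ℤ) ^ (i : ℕ)) •
        ψ (Fin.snoc (fun j : Fin (m + 1) => v ((i.succAbove j).castSucc))
            (mul (v i.castSucc) (v (Fin.last (m + 2)))))) +
    ∑ i : Fin (m + 2), ∑ j : Fin (m + 1),
      if i < i.succAbove j then
        ((-1 : ℤ) ^ ((i : ℕ) + ((i.succAbove j : Fin (m + 2)) : ℕ) + 1)) •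
          ψ (Fin.snoc
              (Fin.cons
                (mul (v i.castSucc) (v ((i.succAbove j).castSucc)) -
                  mul (v ((i.succAbove j).castSucc)) (v i.castSucc))
                (fun k : Fin m => v ((i.succAbove (j.succAbove k)).castSucc)))
              (v (Fin.last (m + 2))))
      else 0

section QHelpers
variable {R M : Type*} [AddCommGroup M]

/-- signed selection sum -/
def selS (f : R → List R → M) : List R → M
  | [] => 0
  | x :: w => f x w - selS (fun y w' => f y (x :: w')) w

/-- signed selection of pairs -/
def selP (f : R → R → List R → M) : List R → M
  | [] => 0
  | x :: w => selS (fun y w' => f x y w') w + selP (fun y z w' => f y z (x :: w')) w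

theorem selS_add (w : List R) : ∀ (f g : R → List R → M),
    selS (fun y w' => f y w' + g y w') w = selS f w + selS g w := by
  induction w with
  | nil => intro f g; simp [selS]
  | cons x w ih => intro f g; simp only [selS]; rw [ih]; abel

theorem selS_neg (w : List R) : ∀ (f : R → List R → M),
    selS (fun y w' => - f y w') w = - selS f w := by
  induction w with
  | nil => intro f; simp [selS]
  | cons x w ih => intro f; simp only [selS]; rw [ih]; abel

theorem selS_sub (w : List R) (f g : R → List R → M) :
    selS (fun y w' => f y w' - g y w') w = selS f w - selS g w := by
  simp only [sub_eq_add_neg]; rw [selS_add, selS_neg]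

theorem selP_add (w : List R) : ∀ (f g : R → R → List R → M),
    selP (fun y z w' => f y z w' + g y z w') w = selP f w + selP g w := by
  induction w with
  | nil => intro f g; simp [selP]
  | cons x w ih => intro f g; simp only [selP]; rw [ih, selS_add]; abel

theorem selP_neg (w : List R) : ∀ (f : R → R → List R → M),
    selP (fun y z w' => - f y z w') w = - selP f w := by
  induction w with
  | nil => intro f; simp [selP]
  | cons x w ih => intro f; simp only [selP]; rw [ih, selS_neg]; abel

theorem selP_sub (w : List R) (f g : R → R → List R → M) :
    selP (fun y z w' => f y z w' - g y z w') w = selP f w - selP g w := by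
  simp only [sub_eq_add_neg]; rw [selP_add, selP_neg]

theorem selP_zero (w : List R) : selP (fun _ _ _ => (0 : M)) w = 0 := by
  have := selP_sub w (fun _ _ _ => (0 : M)) (fun _ _ _ => (0 : M))
  simpa using this

theorem selSS (w : List R) : ∀ (f : R → R → List R → M),
    selS (fun y w' => selS (fun z w'' => f y z w'') w') w
      = selP (fun y z w' => f y z w' - f z y w') w := by
  induction w with
  | nil => intro f; simp [selS, selP]
  | cons x w ih =>
    intro f
    simp only [selS, selP]
    rw [selS_sub, selS_sub, ih (fun y z w' => f y z (x :: w'))]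
    abel

theorem selSS_anti (w : List R) (f : R → R → List R → M) :
    selS (fun y w' => selS (fun z w'' => f y z w'') w') w
      = - selS (fun y w' => selS (fun z w'' => f z y w'') w') w := by
  rw [selSS, selSS, ← selP_neg]
  congr 1; funext y z w'; abel

theorem selSP (w : List R) : ∀ (g : R → R → R → List R → M),
    selS (fun y w' => selP (fun z t w'' => g y z t w'') w') w
      = selP (fun z t w' => selS (fun y w'' => g y z t w'') w') w := by
  induction w with
  | nil => intro g; simp [selS, selP]
  | cons x w ih =>
    intro g
    simp only [selS, selP]
    rw [selS_add, selP_sub, ih (fun y z t w' => g y z t (x :: w')),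
      selSS_anti w (fun y t w' => g y x t w')]
    abel

theorem selPS_zero (w : List R) : ∀ (g : R → R → R → List R → M),
    (∀ y z t w, g y z t w - g y t z w + g z t y w = 0) →
    selP (fun y z w' => selS (fun t w'' => g y z t w'') w') w = 0 := by
  induction w with
  | nil => intro g _; simp [selP]
  | cons x w ih =>
    intro g hg
    simp only [selS, selP]
    rw [selP_sub, ih (fun y z t w' => g y z t (x :: w')) (fun y z t w' => hg y z t _),
      selSS w (fun z t w' => g x z t w'), sub_zero, ← selP_add]
    simp only [hg]
    exact selP_zero w

theorem selPP_zero (w : List R) : ∀ (g : R → R → R → R → List R → M),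
    (∀ y z t s w, g y z t s w = - g t s y z w) →
    selP (fun y z w' => selP (fun t s w'' => g y z t s w'') w') w = 0 := by
  induction w with
  | nil => intro g _; simp [selP]
  | cons x w ih =>
    intro g hg
    simp only [selP]
    rw [selP_add, ih (fun y z t s w' => g y z t s (x :: w')) (fun y z t s w' => hg y z t s _),
      selSP w (fun z t s w' => g x z t s w'), add_zero, ← selP_add]
    have : ∀ (y z : R) (w' : List R), selS (fun y_1 w'' => g x y_1 y z w'') w' +
        selS (fun y_1 w' => g y z x y_1 w') w' = 0 := by
      intro y z w'
      rw [← selS_add]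
      have h : (fun (y_1 : R) w' => g x y_1 y z w' + g y z x y_1 w') =
          fun y_1 w' => (fun _ _ => (0 : M)) y_1 w' - (fun _ _ => (0 : M)) y_1 w' := by
        funext a b; rw [hg x]; simp
      rw [h, selS_sub, sub_self]
    simp only [this]
    exact selP_zero w

theorem selS_ofFn : ∀ (n : ℕ) (f : R → List R → M) (v : Fin (n + 1) → R),
    selS f (List.ofFn v) = ∑ i : Fin (n + 1), ((-1 : ℤ) ^ (i : ℕ)) •
      f (v i) (List.ofFn (fun j => v (i.succAbove j))) := by
  intro n
  induction n with
  | zero => intro f v; simp [selS]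
  | succ n ih =>
    intro f v
    rw [List.ofFn_succ, selS, ih, Fin.sum_univ_succ (n := n + 1), sub_eq_add_neg, ← Finset.sum_neg_distrib]
    congr 1
    · simp [List.ofFn_succ]
    · refine Finset.sum_congr rfl fun i _ => ?_
      rw [List.ofFn_succ (f := fun j => v (i.succ.succAbove j))]
      simp [pow_succ]

theorem selP_ofFn : ∀ (n : ℕ) (f : R → R → List R → M) (v : Fin (n + 2) → R),
    selP f (List.ofFn v) = ∑ i : Fin (n + 2), ∑ j : Fin (n + 1),
      if i < i.succAbove j then
        ((-1 : ℤ) ^ ((i : ℕ) + ((i.succAbove j : Fin (n + 2)) : ℕ) + 1)) •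
          f (v i) (v (i.succAbove j)) (List.ofFn (fun k => v (i.succAbove (j.succAbove k))))
      else 0 := by
  intro n
  induction n with
  | zero =>
    intro f v
    simp [selP, selS, Fin.sum_univ_succ]
  | succ n ih =>
    intro f v
    rw [List.ofFn_succ, selP, selS_ofFn, ih, Fin.sum_univ_succ (n := n + 2)]
    congr 1
    · refine Finset.sum_congr rfl fun i _ => ?_
      simp [pow_succ]
    · refine Finset.sum_congr rfl fun i _ => ?_
      rw [Fin.sum_univ_succ (n := n + 1)]
      simp only [Fin.succ_succAbove_zero, Fin.not_lt_zero, if_false, zero_add,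
        Fin.succ_succAbove_succ, Fin.succ_lt_succ_iff]
      refine Finset.sum_congr rfl fun j _ => ?_
      split_ifs
      · rw [List.ofFn_succ (f := fun k => v (i.succ.succAbove (j.succ.succAbove k)))]
        simp only [Fin.succ_succAbove_zero, Fin.succ_succAbove_succ, Fin.val_succ]
        congr 1
        ring
      · rfl

/-- list version of the coboundary -/
def lD [AddCommGroup R] (mu : R → R → R) (F : List R → R → M) (w : List R) (a : R) : M :=
  selS (fun y w' => F w' (mu y a)) w + selP (fun y z w' => F ((mu y z - mu z y) :: w') a) w

theorem lD_lD {R : Type*} [AddCommGroup R] (mu : R → R → R)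
    (hmod : ∀ y z a, mu z (mu y a) - mu y (mu z a) + mu (mu y z - mu z y) a = 0)
    (hjac : ∀ y z t, (mu (mu y z - mu z y) t - mu t (mu y z - mu z y))
      - (mu (mu y t - mu t y) z - mu z (mu y t - mu t y))
      + (mu (mu z t - mu t z) y - mu y (mu z t - mu t z)) = 0)
    (F : List R → R → M)
    (hF2 : ∀ w a b, F w (a + b) = F w a + F w b)
    (hF1 : ∀ u v w a, F ((u + v) :: w) a = F (u :: w) a + F (v :: w) a)
    (hF3 : ∀ u v w a, F (u :: v :: w) a = - F (v :: u :: w) a)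
    (w : List R) (a : R) : lD mu (lD mu F) w a = 0 := by
  have hF2s : ∀ w a b, F w (a - b) = F w a - F w b := fun w a b =>
    (AddMonoidHom.mk' (F w) (hF2 w)).map_sub a b
  have hF20 : ∀ w, F w 0 = 0 := fun w => (AddMonoidHom.mk' (F w) (hF2 w)).map_zero
  have hF1s : ∀ u v w a, F ((u - v) :: w) a = F (u :: w) a - F (v :: w) a := fun u v w a =>
    (AddMonoidHom.mk' (fun u => F (u :: w) a) (fun u v => hF1 u v w a)).map_sub u v
  have hF10 : ∀ w a, F (0 :: w) a = 0 := fun w a =>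
    (AddMonoidHom.mk' (fun u => F (u :: w) a) (fun u v => hF1 u v w a)).map_zero
  have hJ := selPS_zero w
    (fun y z t w => F ((mu (mu y z - mu z y) t - mu t (mu y z - mu z y)) :: w) a) (by
      intro y z t w
      rw [← hF1s, ← hF1, hjac, hF10])
  have hPP := selPP_zero w
    (fun y z t s w => F ((mu t s - mu s t) :: (mu y z - mu z y) :: w) a) (by
      intro y z t s w
      exact hF3 _ _ _ _)
  have hSP := selSP w (fun y z t w => F ((mu z t - mu t z) :: w) (mu y a))
  have hM : selP (fun y z w' => F w' (mu z (mu y a)) - F w' (mu y (mu z a))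
      + F w' (mu (mu y z - mu z y) a)) w = 0 := by
    simp only [← hF2s, ← hF2, hmod, hF20]
    exact selP_zero w
  rw [selP_add, ← selSS w (fun y z w' => F w' (mu z (mu y a)))] at hM
  simp only [lD, selS, selP]
  rw [selS_add, selP_add, selP_sub, selP_add, hJ, hPP, hSP]
  refine Eq.trans ?_ hM
  abel

theorem lD_ofFn {K R : Type*} [CommRing K] [AddCommGroup R] [Module K R]
    (mul : R →ₗ[K] R →ₗ[K] R) {m : ℕ} (φ : (Fin (m + 2) → R) → M) (G : List R → R → M)
    (hG : ∀ (v : Fin (m + 1) → R) a, G (List.ofFn v) a = φ (Fin.snoc v a))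
    (v : Fin (m + 2) → R) (a : R) :
    lD (fun x y => mul x y) G (List.ofFn v) a = qDelta mul φ (Fin.snoc v a) := by
  unfold lD qDelta
  rw [selS_ofFn, selP_ofFn]
  congr 1
  · refine Finset.sum_congr rfl fun i _ => ?_
    rw [hG]; simp
  · refine Finset.sum_congr rfl fun i _ => Finset.sum_congr rfl fun j _ => ?_
    split_ifs
    · simp only [Fin.snoc_castSucc, Fin.snoc_last]
      rw [← hG, List.ofFn_succ]
      simp
    · rfl

open Classical in
/-- extension of a cochain to lists -/
noncomputable def lext {k : ℕ} (φ : (Fin (k + 1) → R) → M) (l : List R) (a : R) : M :=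
  if h : ∃ v : Fin k → R, l = List.ofFn v then φ (Fin.snoc h.choose a) else 0

theorem lext_ofFn {k : ℕ} (φ : (Fin (k + 1) → R) → M) (v : Fin k → R) (a : R) :
    lext φ (List.ofFn v) a = φ (Fin.snoc v a) := by
  have h : ∃ u : Fin k → R, List.ofFn v = List.ofFn u := ⟨v, rfl⟩
  rw [lext, dif_pos h, ← List.ofFn_injective h.choose_spec]

theorem lext_of_ne {k : ℕ} (φ : (Fin (k + 1) → R) → M) (l : List R) (hl : l.length ≠ k) (a : R) :
    lext φ l a = 0 := by
  rw [lext, dif_neg]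
  rintro ⟨v, rfl⟩
  simp at hl

theorem exists_ofFn {k : ℕ} (l : List R) (hl : l.length = k) :
    ∃ v : Fin k → R, l = List.ofFn v := by
  subst hl; exact ⟨l.get, (List.ofFn_get l).symm⟩

theorem lext_cons {k : ℕ} (φ : (Fin (k + 2) → R) → M) (u : R) (v : Fin k → R) (a : R) :
    lext (k := k + 1) φ (u :: List.ofFn v) a
      = φ (Fin.cons (α := fun _ => R) u (Fin.snoc (α := fun _ => R) v a)) := by
  have := lext_ofFn (k := k + 1) φ (Fin.cons u v) a
  rw [List.ofFn_succ] at this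
  simp only [Fin.cons_zero, Fin.cons_succ] at this
  rw [this, Fin.cons_snoc_eq_snoc_cons]

theorem qq_zero {K R M : Type*} [CommRing K] [AddCommGroup R] [Module K R]
    [AddCommGroup M] [Module K M]
    (mul : R →ₗ[K] R →ₗ[K] R)
    (hquasi : ∀ a b c : R,
      mul a (mul b c) - mul (mul a b) c = mul b (mul a c) - mul (mul b a) c)
    (m : ℕ) (ψ : MultilinearMap K (fun _ : Fin (m + 2) => R) M)
    (h3 : ∀ u v w a, lext (k := m + 1) (⇑ψ) (u :: v :: w) a
      = - lext (k := m + 1) (⇑ψ) (v :: u :: w) a) :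
    qDelta mul (m := m + 1) (qDelta mul (m := m) ⇑ψ) = 0 := by
  funext v
  rw [← Fin.snoc_init_self v]
  rw [← lD_ofFn mul (qDelta mul ⇑ψ) (lD (fun x y => mul x y) (lext (k := m + 1) ⇑ψ))
    (fun v a => lD_ofFn mul ψ _ (fun v a => lext_ofFn _ v a) v a)]
  refine lD_lD _ ?_ ?_ _ ?_ ?_ h3 _ _
  · intro y z a
    have := hquasi y z a
    simp only [map_sub, LinearMap.sub_apply]
    linear_combination (norm := abel) -this
  · intro y z t
    have h1 := hquasi y z t
    have h2 := hquasi z t y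
    have h3 := hquasi t y z
    simp only [map_sub, LinearMap.sub_apply]
    linear_combination (norm := abel) -h1 - h2 - h3
  · intro w a b
    by_cases hw : w.length = m + 1
    · obtain ⟨v, rfl⟩ := exists_ofFn w hw
      simp only [lext_ofFn]
      exact ψ.snoc_add v a b
    · simp [lext_of_ne _ _ hw]
  · intro u v w a
    by_cases hw : w.length = m
    · obtain ⟨x, rfl⟩ := exists_ofFn w hw
      simp only [lext_cons]
      exact ψ.cons_add _ _ _
    · have : ∀ u, lext (k := m + 1) (⇑ψ) (u :: w) a = 0 := fun u =>
        lext_of_ne _ _ (by simpa using hw) _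
      simp [this]

end QHelpers

/-- for a quasiassociative algebra `R`, `δ(δψ) = 0` for every
2-cochain `ψ`, and for every `n`-cochain `ψ` (`n = m + 3 ≥ 3`) that is antisymmetric
in its first two arguments. -/
theorem stmt9 {K R M : Type*} [CommRing K] [AddCommGroup R] [Module K R]
    [AddCommGroup M] [Module K M]
    (mul : R →ₗ[K] R →ₗ[K] R)
    (hquasi : ∀ a b c : R,
      mul a (mul b c) - mul (mul a b) c = mul b (mul a c) - mul (mul b a) c) :
    (∀ ψ : MultilinearMap K (fun _ : Fin 2 => R) M,
      qDelta mul (m := 1) (qDelta mul (m := 0) ⇑ψ) = 0) ∧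
    (∀ (m : ℕ) (ψ : MultilinearMap K (fun _ : Fin (m + 3) => R) M),
      (∀ v : Fin (m + 3) → R, ψ (v ∘ Equiv.swap 0 1) = - ψ v) →
      qDelta mul (m := m + 2) (qDelta mul (m := m + 1) ⇑ψ) = 0) := by
  refine ⟨fun ψ => qq_zero mul hquasi 0 ψ ?_, fun m ψ hψ => qq_zero mul hquasi (m + 1) ψ ?_⟩
  · intro u v w a
    rw [lext_of_ne _ _ (by simp), lext_of_ne _ _ (by simp), neg_zero]
  · intro u v w a
    by_cases hw : w.length = m
    · obtain ⟨x, rfl⟩ := exists_ofFn w hw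
      have h : ∀ u v : R, lext (k := m + 2) (⇑ψ) (u :: v :: List.ofFn x) a
          = ψ (Fin.cons (α := fun _ => R) u (Fin.cons (α := fun _ => R) v
              (Fin.snoc (α := fun _ => R) x a))) := by
        intro u v
        have := lext_cons (k := m + 1) (⇑ψ) u (Fin.cons v x) a
        rw [List.ofFn_succ] at this
        simp only [Fin.cons_zero, Fin.cons_succ] at this
        rw [this, ← Fin.cons_snoc_eq_snoc_cons v x a]
      rw [h, h, ← hψ]
      congr 1
      funext i
      refine Fin.cases ?_ (fun i => Fin.cases ?_ (fun i => ?_) i) i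
      · simp
      · simp
      · have : Equiv.swap (0 : Fin (m + 3)) 1 i.succ.succ = i.succ.succ :=
          Equiv.swap_apply_of_ne_of_ne (Fin.succ_ne_zero _)
            (fun h => Fin.succ_ne_zero i (Fin.succ_injective _ h))
        simp only [Function.comp, this, Fin.cons_succ]
    · rw [lext_of_ne _ _ (by simpa using hw), lext_of_ne _ _ (by simpa using hw), neg_zero]
end

section
/- Let K be a commutative ring, R a quasiassociative algebra over K, M a K-module, and χ : R → End_K(M) a K-linear map satisfying χ(a*b) = χ(a) ∘ χ(b) for all a, b ∈ R. Write a.m for χ(a)(m). Define δ on cochains Cⁿ = Hom_K(R^⊗n, M) by δψ(a₁,…,aₙ,a) = Σ_{i=1}^{n} (−1)^{i+1}[ψ(a₁,…,âᵢ,…,aₙ, aᵢ*a) − aᵢ.ψ(a₁,…,âᵢ,…,aₙ, a)] + Σ_{1≤i<j≤n} (−1)^{i+j+1} ψ([aᵢ,aⱼ], a₁,…,âᵢ,…,âⱼ,…,aₙ, a), with δm(a) = −a.m for m ∈ C⁰ = M and [a,b] = a*b − b*a. Then δ(δψ) = 0 for all ψ ∈ C⁰, C¹, C², and for all ψ ∈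 Cⁿ, n ≥ 3, that are antisymmetric in their first two arguments. -/
/-- The quasiassociative coboundary `δ : Cⁿ → Cⁿ⁺¹` with coefficients in a module `M`
on which `R` acts via `χ` (here `n = m + 2 ≥ 2`):
`δψ(a₁,…,aₙ,a) = Σᵢ (−1)^{i+1} [ψ(…,âᵢ,…, aᵢ*a) − aᵢ.ψ(…,âᵢ,…, a)]
  + Σ_{i<j} (−1)^{i+j+1} ψ([aᵢ,aⱼ], …,âᵢ,…,âⱼ,…, a)`,
with `[a,b] = a*b − b*a` and `a.m = χ(a)(m)`, written 0-indexed: the argument vector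
is `v : Fin (m+3) → R` with `a = v (Fin.last (m+2))`, omission realized via
`Fin.succAbove`. -/
noncomputable def qDeltaRep {K R M : Type*} [CommRing K] [AddCommGroup R] [Module K R]
    [AddCommGroup M] [Module K M]
    (mul : R →ₗ[K] R →ₗ[K] R) (χ : R →ₗ[K] Module.End K M) {m : ℕ}
    (ψ : (Fin (m + 2) → R) → M) : (Fin (m + 3) → R) → M :=
  fun v =>
    (∑ i : Fin (m + 2), ((-1 : ℤ) ^ (i : ℕ)) •
        (ψ (Fin.snoc (fun j : Fin (m + 1) => v ((i.succAbove j).castSucc))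
              (mul (v i.castSucc) (v (Fin.last (m + 2))))) -
          χ (v i.castSucc)
            (ψ (Fin.snoc (fun j : Fin (m + 1) => v ((i.succAbove j).castSucc))
                (v (Fin.last (m + 2))))))) +
    ∑ i : Fin (m + 2), ∑ j : Fin (m + 1),
      if i < i.succAbove j then
        ((-1 : ℤ) ^ ((i : ℕ) + ((i.succAbove j : Fin (m + 2)) : ℕ) + 1)) •
          ψ (Fin.snoc
              (Fin.cons
                (mul (v i.castSucc) (v ((i.succAbove j).castSucc)) -
                  mul (v ((i.succAbove j).castSucc)) (v i.castSucc))
                (fun k : Fin m => v ((i.succAbove (j.succAbove k)).castSucc)))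
              (v (Fin.last (m + 2))))
      else 0

/-- The coboundary `δ : C⁰ = M → C¹`, `δm(a) = −a.m`. -/
noncomputable def qDeltaRep0 {K R M : Type*} [CommRing K] [AddCommGroup R] [Module K R]
    [AddCommGroup M] [Module K M]
    (χ : R →ₗ[K] Module.End K M) (x : M) : (Fin 1 → R) → M :=
  fun v => -(χ (v 0) x)

/-- The coboundary `δ : C¹ → C²`, `δψ(a₁, a) = ψ(a₁*a) − a₁.ψ(a)`. -/
noncomputable def qDeltaRep1 {K R M : Type*} [CommRing K] [AddCommGroup R] [Module K R]
    [AddCommGroup M] [Module K M]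
    (mul : R →ₗ[K] R →ₗ[K] R) (χ : R →ₗ[K] Module.End K M)
    (ψ : (Fin 1 → R) → M) : (Fin 2 → R) → M :=
  fun v => ψ (fun _ => mul (v 0) (v 1)) - χ (v 0) (ψ (fun _ => v 1))

namespace QA

section E
variable {R M : Type*} [AddCommGroup M]

/-- signed extraction of one element -/
def E1 : (R → List R → M) → List R → M
  | _, [] => 0
  | g, a :: l => g a l - E1 (fun b l' => g b (a :: l')) l

/-- signed extraction of two elements -/
def E2 : (R → R → List R → M) → List R → M
  | _, [] => 0
  | g, a :: l => E1 (g a) l + E2 (fun b c l' => g b c (a :: l')) l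

theorem E1_add (g h : R → List R → M) (l : List R) :
    E1 (fun a l' => g a l' + h a l') l = E1 g l + E1 h l := by
  induction l generalizing g h with
  | nil => simp [E1]
  | cons a l ih => simp only [E1, ih]; abel

theorem E1_map {N : Type*} [AddCommGroup N] (F : M →+ N) (g : R → List R → M) (l : List R) :
    E1 (fun a l' => F (g a l')) l = F (E1 g l) := by
  induction l generalizing g with
  | nil => simp [E1]
  | cons a l ih => simp only [E1, ih, map_sub]

theorem E1_neg (g : R → List R → M) (l : List R) :
    E1 (fun a l' => - g a l') l = - E1 g l := by
  induction l generalizing g with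
  | nil => simp [E1]
  | cons a l ih => simp only [E1, ih]; abel

theorem E1_sub (g h : R → List R → M) (l : List R) :
    E1 (fun a l' => g a l' - h a l') l = E1 g l - E1 h l := by
  simp only [sub_eq_add_neg, E1_add, E1_neg]

theorem E2_add (g h : R → R → List R → M) (l : List R) :
    E2 (fun a b l' => g a b l' + h a b l') l = E2 g l + E2 h l := by
  induction l generalizing g h with
  | nil => simp [E2]
  | cons a l ih => simp only [E2, ih, E1_add]; abel

theorem E2_neg (g : R → R → List R → M) (l : List R) :
    E2 (fun a b l' => - g a b l') l = - E2 g l := by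
  induction l generalizing g with
  | nil => simp [E2]
  | cons a l ih => simp only [E2, ih, E1_neg]; abel

theorem E2_sub (g h : R → R → List R → M) (l : List R) :
    E2 (fun a b l' => g a b l' - h a b l') l = E2 g l - E2 h l := by
  simp only [sub_eq_add_neg, E2_add, E2_neg]

theorem E2_map {N : Type*} [AddCommGroup N] (F : M →+ N) (g : R → R → List R → M)
    (l : List R) : E2 (fun a b l' => F (g a b l')) l = F (E2 g l) := by
  induction l generalizing g with
  | nil => simp [E2]
  | cons a l ih => simp only [E2, ih, E1_map, map_add]

theorem E1_zero (l : List R) : E1 (fun _ _ => (0 : M)) l = 0 := by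
  simpa using E1_map (0 : M →+ M) (fun (_ : R) _ => (0 : M)) l

theorem E2_zero (l : List R) : E2 (fun _ _ _ => (0 : M)) l = 0 := by
  simpa using E2_map (0 : M →+ M) (fun (_ _ : R) _ => (0 : M)) l

theorem E1E1 (h : R → R → List R → M) (l : List R) :
    E1 (fun a l' => E1 (h a) l') l = E2 (fun a b l' => h a b l' - h b a l') l := by
  induction l generalizing h with
  | nil => simp [E1, E2]
  | cons x l ih =>
    simp only [E1, E2, E1_sub]
    rw [ih (fun b c l'' => h b c (x :: l''))]
    abel

theorem E1E1_swap (h : R → R → List R → M) (l : List R) :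
    E1 (fun a l' => E1 (h a) l') l = - E1 (fun a l' => E1 (fun b => h b a) l') l := by
  rw [E1E1, E1E1 (fun a b => h b a), ← E2_neg]
  simp

theorem E1E2 (h : R → R → R → List R → M) (l : List R) :
    E1 (fun a l' => E2 (h a) l') l = E2 (fun b c l' => E1 (fun a => h a b c) l') l := by
  induction l generalizing h with
  | nil => simp [E1, E2]
  | cons x l ih =>
    simp only [E1, E2, E1_add, E2_sub]
    rw [ih (fun a b c l'' => h a b c (x :: l'')), E1E1_swap (fun a b => h a x b)]
    have : E2 (fun b c l' => h x b c l') l = E2 (h x) l := rfl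
    rw [this]
    abel

theorem E2E1 (h : R → R → R → List R → M)
    (hh : ∀ a b c l, h a b c l - h a c b l + h b c a l = 0) (l : List R) :
    E2 (fun a b l' => E1 (h a b) l') l = 0 := by
  induction l generalizing h with
  | nil => simp [E2]
  | cons x l ih =>
    simp only [E1, E2, E2_sub]
    rw [ih (fun a b c l'' => h a b c (x :: l'')) (fun a b c l => hh a b c _),
      E1E1 (h x), sub_zero, ← E2_add]
    simp only [hh, E2_zero]

theorem E2E2 (h : R → R → R → R → List R → M)
    (hh : ∀ a b c d l, h a b c d l = - h c d a b l) (l : List R) :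
    E2 (fun a b l' => E2 (h a b) l') l = 0 := by
  induction l generalizing h with
  | nil => simp [E2]
  | cons x l ih =>
    simp only [E2, E2_add]
    rw [ih (fun a b c d l'' => h a b c d (x :: l'')) (fun a b c d l => hh a b c d _),
      E1E2 (fun b c d => h x b c d), add_zero, ← E2_add]
    have : ∀ b c l', E1 (fun a => h x a b c) l' + E1 (h b c x) l' = 0 := by
      intro b c l'
      rw [← E1_add]
      have : ∀ a l, h x a b c l + h b c x a l = 0 := by
        intro a l; rw [hh x a b c]; simp
      simp only [this, E1_zero]
    simp only [this, E2_zero]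

theorem E1_ofFn {n : ℕ} (g : R → List R → M) (v : Fin (n + 1) → R) :
    E1 g (List.ofFn v) =
      ∑ i : Fin (n + 1), ((-1 : ℤ) ^ (i : ℕ)) •
        g (v i) (List.ofFn (fun j => v (i.succAbove j))) := by
  induction n generalizing g with
  | zero => simp [E1]
  | succ n ih =>
    rw [List.ofFn_succ, E1, ih]
    refine Eq.trans ?_ (Fin.sum_univ_succ _).symm
    have : ∀ i : Fin (n + 1), (List.ofFn fun j => v (i.succ.succAbove j)) =
        v 0 :: List.ofFn fun j => v (i.succAbove j).succ := by
      intro i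
      rw [List.ofFn_succ]
      simp
    simp only [this]
    simp [pow_succ, sub_eq_add_neg]

theorem E2_ofFn {n : ℕ} (g : R → R → List R → M) (v : Fin (n + 2) → R) :
    E2 g (List.ofFn v) =
      ∑ i : Fin (n + 2), ∑ j : Fin (n + 1),
        if i < i.succAbove j then
          ((-1 : ℤ) ^ ((i : ℕ) + ((i.succAbove j : Fin (n + 2)) : ℕ) + 1)) •
            g (v i) (v (i.succAbove j))
              (List.ofFn (fun k => v (i.succAbove (j.succAbove k))))
        else 0 := by
  induction n generalizing g with
  | zero => simp [E1, E2, Fin.sum_univ_succ]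
  | succ n ih =>
    rw [List.ofFn_succ, E2, ih, E1_ofFn]
    refine Eq.trans ?_ (Fin.sum_univ_succ _).symm
    congr 1
    · simp [pow_succ]
    · refine Finset.sum_congr rfl fun i _ => ?_
      have : ∀ j : Fin (n + 1),
          (List.ofFn fun k => v (i.succ.succAbove (j.succ.succAbove k))) =
          v 0 :: List.ofFn fun k => v (i.succAbove (j.succAbove k)).succ := by
        intro j
        rw [List.ofFn_succ]
        simp
      refine Eq.trans ?_ (Fin.sum_univ_succ _).symm
      simp only [this]
      simp [pow_succ, pow_add]

end E

section D
variable {K R M : Type*} [CommRing K] [AddCommGroup R] [Module K R]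
    [AddCommGroup M] [Module K M]
    (mul : R →ₗ[K] R →ₗ[K] R) (χ : R →ₗ[K] Module.End K M)

def D (f : List R → R → M) (l : List R) (x : R) : M :=
  E1 (fun a l' => f l' (mul a x) - χ a (f l' x)) l +
    E2 (fun a b l' => f ((mul a b - mul b a) :: l') x) l

theorem DD (hquasi : ∀ a b c : R,
      mul a (mul b c) - mul (mul a b) c = mul b (mul a c) - mul (mul b a) c)
    (hrep : ∀ a b : R, χ (mul a b) = χ a * χ b)
    (f : List R → R → M)
    (hx : ∀ l x y, f l (x + y) = f l x + f l y)
    (h1 : ∀ l a b x, f ((a + b) :: l) x = f (a :: l) x + f (b :: l) x)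
    (h2 : ∀ l a b x, f (a :: b :: l) x = - f (b :: a :: l) x) (l : List R) (x : R) :
    D mul χ (D mul χ f) l x = 0 := by
  have hxs : ∀ l x y, f l (x - y) = f l x - f l y := by
    intro l x y
    rw [eq_sub_iff_add_eq, ← hx, sub_add_cancel]
  have h0 : ∀ l x, f (0 :: l) x = 0 := by
    intro l x
    simpa using h1 l 0 0 x
  have key1 : ∀ a l', D mul χ f l' (mul a x) - χ a (D mul χ f l' x) =
      E1 (fun b l'' => (f l'' (mul b (mul a x)) - χ b (f l'' (mul a x))) -
        χ a (f l'' (mul b x) - χ b (f l'' x))) l' +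
      E2 (fun b c l'' => f ((mul b c - mul c b) :: l'') (mul a x) -
        χ a (f ((mul b c - mul c b) :: l'') x)) l' := by
    intro a l'
    have e1 := fun g => E1_map (R := R) (χ a).toAddMonoidHom g l'
    have e2 := fun g => E2_map (R := R) (χ a).toAddMonoidHom g l'
    simp only [LinearMap.toAddMonoidHom_coe] at e1 e2
    rw [E1_sub, E2_sub, e1, e2, D, D, map_add]
    abel
  have key2 : ∀ a b l', D mul χ f ((mul a b - mul b a) :: l') x =
      (f l' (mul (mul a b - mul b a) x) - χ (mul a b - mul b a) (f l' x)) -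
      E1 (fun c l'' => f ((mul a b - mul b a) :: l'') (mul c x) -
        χ c (f ((mul a b - mul b a) :: l'') x)) l' +
      (E1 (fun c l'' => f ((mul (mul a b - mul b a) c - mul c (mul a b - mul b a)) :: l'') x) l' +
      E2 (fun c d l'' => f ((mul c d - mul d c) :: (mul a b - mul b a) :: l'') x) l') := by
    intro a b l'
    rw [D, E1, E2]
  rw [D]
  simp only [key1, key2]
  rw [E1_add, E2_add, E2_sub, E2_add, E1E1, E1E2
    (fun a b c l'' => f ((mul b c - mul c b) :: l'') (mul a x) -
        χ a (f ((mul b c - mul c b) :: l'') x)),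
    E2E1 (fun a b c l'' => f ((mul (mul a b - mul b a) c - mul c (mul a b - mul b a)) :: l'') x),
    E2E2 (fun a b c d l'' => f ((mul c d - mul d c) :: (mul a b - mul b a) :: l'') x)]
  · rw [show ∀ p q r : M, p + q + (r - q + (0 + 0)) = p + r by intros; abel, ← E2_add]
    refine Eq.trans ?_ (E2_zero l)
    congr 1
    funext a b l'
    have := congrArg (f l') (hquasi a b x)
    simp only [hxs] at this
    simp only [map_sub, LinearMap.sub_apply, hxs, hrep, Module.End.mul_apply]
    linear_combination (norm := module) (-1 : ℤ) • this
  · intros; exact h2 _ _ _ _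
  · intro a b c l
    have hs : ∀ l a b x, f ((a - b) :: l) x = f (a :: l) x - f (b :: l) x := by
      intro l a b x
      rw [eq_sub_iff_add_eq, ← h1, sub_add_cancel]
    rw [← hs, ← h1]
    convert h0 l x using 2
    congr 1
    have q1 := hquasi a b c
    have q2 := hquasi b c a
    have q3 := hquasi c a b
    simp only [map_sub, LinearMap.sub_apply]
    linear_combination (norm := module) (-1 : ℤ) • q1 + (-1 : ℤ) • q2 + (-1 : ℤ) • q3

theorem qDelta_eq {m : ℕ} (φ : (Fin (m + 2) → R) → M) (f : List R → R → M)
    (h : ∀ (w : Fin (m + 1) → R) x, φ (Fin.snoc w x) = f (List.ofFn w) x)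
    (w : Fin (m + 2) → R) (x : R) :
    qDeltaRep mul χ φ (Fin.snoc w x) = D mul χ f (List.ofFn w) x := by
  rw [D, E1_ofFn, E2_ofFn, qDeltaRep]
  simp only [h, Fin.snoc_castSucc, Fin.snoc_last, List.ofFn_cons]

theorem qDelta1_eq (φ : (Fin 1 → R) → M) (f : List R → R → M)
    (h : ∀ x, φ (fun _ => x) = f [] x)
    (w : Fin 1 → R) (x : R) :
    qDeltaRep1 mul χ φ (Fin.snoc w x) = D mul χ f (List.ofFn w) x := by
  have e0 : (Fin.snoc w x : Fin 2 → R) 0 = w 0 := Fin.snoc_castSucc (α := fun _ => R) x w 0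
  have e1 : (Fin.snoc w x : Fin 2 → R) 1 = x := Fin.snoc_last (α := fun _ => R) x w
  simp [D, E1, E2, qDeltaRep1, h, e0, e1]

open Classical in
def toL {m : ℕ} (ψ : (Fin (m + 1) → R) → M) (l : List R) (x : R) : M :=
  if l.length = m then ψ (Fin.snoc (fun i : Fin m => l.getD i 0) x) else 0

theorem toL_ofFn {m : ℕ} (ψ : (Fin (m + 1) → R) → M) (w : Fin m → R) (x : R) :
    ψ (Fin.snoc w x) = toL ψ (List.ofFn w) x := by
  simp [toL]

theorem toL_len {m : ℕ} (ψ : (Fin (m + 1) → R) → M) (l : List R) (h : l.length ≠ m) (x : R) :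
    toL ψ l x = 0 := by
  simp [toL, h]

theorem toL_hx {m : ℕ} (ψ : MultilinearMap K (fun _ : Fin (m + 1) => R) M)
    (l : List R) (x y : R) : toL ψ l (x + y) = toL ψ l x + toL ψ l y := by
  unfold toL
  split_ifs
  · exact MultilinearMap.snoc_add ψ _ x y
  · simp

theorem ofFn_ex (l : List R) (m : ℕ) (h : l.length = m) : ∃ w : Fin m → R, l = List.ofFn w := by
  subst h
  exact ⟨l.get, by simp⟩

theorem toL_h1 {m : ℕ} (ψ : MultilinearMap K (fun _ : Fin (m + 1) => R) M)
    (l : List R) (a b x : R) :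
    toL ψ ((a + b) :: l) x = toL ψ (a :: l) x + toL ψ (b :: l) x := by
  by_cases h : l.length + 1 = m
  · subst h
    obtain ⟨w, hw⟩ := ofFn_ex l _ rfl
    generalize l.length = n at *
    subst hw
    simp only [← List.ofFn_cons (n := n), ← toL_ofFn]
    simp only [← Fin.cons_snoc_eq_snoc_cons (β := R)]
    exact MultilinearMap.cons_add ψ _ a b
  · rw [toL_len, toL_len, toL_len, add_zero] <;> simpa

theorem toL_h2 {m : ℕ} (ψ : MultilinearMap K (fun _ : Fin (m + 3) => R) M)
    (hψ : ∀ v : Fin (m + 3) → R, ψ (v ∘ Equiv.swap 0 1) = - ψ v)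
    (l : List R) (a b x : R) :
    toL ψ (a :: b :: l) x = - toL ψ (b :: a :: l) x := by
  by_cases h : l.length = m
  · subst h
    obtain ⟨w, hw⟩ := ofFn_ex l _ rfl
    generalize l.length = n at *
    subst hw
    simp only [← List.ofFn_cons, ← toL_ofFn]
    rw [← hψ]
    congr 1
    simp only [← Fin.cons_snoc_eq_snoc_cons (β := R)]
    funext i
    refine Fin.cases ?_ (fun i => Fin.cases ?_ (fun i => ?_) i) i
    · simp
    · simp
    · rw [Function.comp_apply, Equiv.swap_apply_of_ne_of_ne]
      · simp
      · exact Fin.succ_ne_zero _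
      · intro h
        have := congrArg Fin.val h
        simp at this
  · rw [toL_len, toL_len, neg_zero] <;> simpa

end D

end QA

/-- for a quasiassociative algebra `R` and a left representation
`χ : R → End_K(M)` (i.e. `χ(a*b) = χ(a)∘χ(b)`), the coboundary with coefficients in
`M` satisfies `δ(δψ) = 0` for all `ψ ∈ C⁰, C¹, C²`, and for all `ψ ∈ Cⁿ`, `n ≥ 3`,
that are antisymmetric in their first two arguments. -/
theorem stmt10 {K R M : Type*} [CommRing K] [AddCommGroup R] [Module K R]
    [AddCommGroup M] [Module K M]
    (mul : R →ₗ[K] R →ₗ[K] R)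
    (hquasi : ∀ a b c : R,
      mul a (mul b c) - mul (mul a b) c = mul b (mul a c) - mul (mul b a) c)
    (χ : R →ₗ[K] Module.End K M)
    (hrep : ∀ a b : R, χ (mul a b) = χ a * χ b) :
    (∀ x : M, qDeltaRep1 mul χ (qDeltaRep0 χ x) = 0) ∧
    (∀ ψ : MultilinearMap K (fun _ : Fin 1 => R) M,
      qDeltaRep mul χ (m := 0) (qDeltaRep1 mul χ ⇑ψ) = 0) ∧
    (∀ ψ : MultilinearMap K (fun _ : Fin 2 => R) M,
      qDeltaRep mul χ (m := 1) (qDeltaRep mul χ (m := 0) ⇑ψ) = 0) ∧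
    (∀ (m : ℕ) (ψ : MultilinearMap K (fun _ : Fin (m + 3) => R) M),
      (∀ v : Fin (m + 3) → R, ψ (v ∘ Equiv.swap 0 1) = - ψ v) →
      qDeltaRep mul χ (m := m + 2) (qDeltaRep mul χ (m := m + 1) ⇑ψ) = 0) := by
  refine ⟨?_, ?_, ?_, ?_⟩
  · intro x
    funext v
    simp [qDeltaRep1, qDeltaRep0, hrep]
  · intro ψ
    funext v
    rw [← Fin.snoc_init_self v, QA.qDelta_eq mul χ _ _
      (QA.qDelta1_eq mul χ ψ (QA.toL (m := 0) ψ) ?_)]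
    · refine QA.DD mul χ hquasi hrep _ (QA.toL_hx ψ) (QA.toL_h1 ψ) ?_ _ _
      intro l a b x
      rw [QA.toL_len, QA.toL_len, neg_zero] <;> simp
    · intro x
      have := QA.toL_ofFn (m := 0) ψ (fun _ => 0) x
      rw [List.ofFn_zero] at this
      rw [← this]
      congr 1
  · intro ψ
    funext v
    rw [← Fin.snoc_init_self v, QA.qDelta_eq mul χ _ _
      (QA.qDelta_eq mul χ ψ (QA.toL (m := 1) ψ) (QA.toL_ofFn _))]
    refine QA.DD mul χ hquasi hrep _ (QA.toL_hx ψ) (QA.toL_h1 ψ) ?_ _ _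
    intro l a b x
    rw [QA.toL_len, QA.toL_len, neg_zero] <;> simp
  · intro m ψ hψ
    funext v
    rw [← Fin.snoc_init_self v, QA.qDelta_eq mul χ _ _
      (QA.qDelta_eq mul χ ψ (QA.toL (m := m + 2) ψ) (QA.toL_ofFn _))]
    exact QA.DD mul χ hquasi hrep _ (QA.toL_hx ψ) (QA.toL_h1 ψ) (QA.toL_h2 ψ hψ) _ _
end

section
/- Let K be a commutative ring with a derivation ∂ : K → K. Define on K the bracket [X,Y] = X·∂Y − (∂X)·Y and the bilinear form ω(X,Y) = X·∂³Y. Then for all X, Y, Z ∈ K: (i) ω(X,Y) + ω(Y,X) lies in the image of ∂; (ii) ω([X,Y], Z) + ω([Y,Z], X) + ω([Z,X], Y) lies in the image of ∂. That is, the Gelfand–Fuks form ω is a generalized (skew-symmetric) 2-cocycle on the Lie algebra of vector fields D₁(K). -/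
/-- for a commutative ring `K` with a derivation `∂`, the Gelfand–Fuks
form `ω(X,Y) = X·∂³Y` is a generalized skew-symmetric 2-cocycle on the Lie algebra of
vector fields `D₁(K)` with bracket `[X,Y] = X∂Y − (∂X)Y`: both `ω(X,Y) + ω(Y,X)` and
the cyclic sum `ω([X,Y],Z) + ω([Y,Z],X) + ω([Z,X],Y)` lie in the image of `∂`. -/
theorem stmt11 {K : Type*} [CommRing K] (d : K → K)
    (hadd : ∀ a b : K, d (a + b) = d a + d b)
    (hleibniz : ∀ a b : K, d (a * b) = a * d b + d a * b) :
    (∀ X Y : K, X * d (d (d Y)) + Y * d (d (d X)) ∈ Set.range d) ∧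
    (∀ X Y Z : K,
      (X * d Y - d X * Y) * d (d (d Z)) +
      (Y * d Z - d Y * Z) * d (d (d X)) +
      (Z * d X - d Z * X) * d (d (d Y)) ∈ Set.range d) := by
  have h0 : d 0 = 0 := by
    have h := hadd 0 0
    rw [add_zero] at h
    linear_combination -h
  have hneg : ∀ a, d (-a) = -d a := by
    intro a
    have h := hadd a (-a)
    rw [add_neg_cancel, h0] at h
    linear_combination -h
  have hsub : ∀ a b, d (a - b) = d a - d b := by
    intro a b
    rw [sub_eq_add_neg, hadd, hneg, sub_eq_add_neg]
  refine ⟨fun X Y => ⟨X * d (d Y) + d (d X) * Y - d X * d Y, ?_⟩, fun X Y Z =>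
    ⟨(X * d Y - d X * Y) * d (d Z) + (Y * d Z - d Y * Z) * d (d X) +
      (Z * d X - d Z * X) * d (d Y), ?_⟩⟩
  · simp only [hadd, hsub, hleibniz]
    ring
  · simp only [hadd, hsub, hleibniz]
    ring
end

section
/- Let k be a field of characteristic zero and ε ∈ k such that 1 + ε·n ≠ 0 for every integer n. On the Laurent polynomial ring k[x, x⁻¹], let * be the k-bilinear multiplication determined on monomials by x^{1−p} * x^{1−q} = (−q(1+εq)/(1+ε(p+q))) · x^{1−p−q} for p, q ∈ ℤ. Then for all u, v ∈ k[x, x⁻¹]: u*v − v*u = u·v' − u'·v, where ' = d/dx is the formal derivative. In particular the commutator of * is the Lie bracket of vector fields on the circle. -/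
/-- on the Laurent polynomial ring `k[x, x⁻¹]`, the `k`-bilinear
multiplication `*` determined on monomials by
`x^{1−p} * x^{1−q} = (−q(1+εq)/(1+ε(p+q))) x^{1−p−q}` has commutator
`u*v − v*u = u·v' − u'·v`, where `'` is the formal derivative (determined by
`(xⁿ)' = n xⁿ⁻¹`); i.e. its commutator is the Lie bracket of vector fields on the
circle. -/
theorem stmt12 {k : Type*} [Field k] [CharZero k] (ε : k)
    (hε : ∀ n : ℤ, (1 : k) + ε * (n : k) ≠ 0)
    (qmul : LaurentPolynomial k →ₗ[k] LaurentPolynomial k →ₗ[k] LaurentPolynomial k)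
    (hqmul : ∀ p q : ℤ,
      qmul (LaurentPolynomial.T (1 - p)) (LaurentPolynomial.T (1 - q))
        = (-((q : k) * (1 + ε * (q : k))) / (1 + ε * ((p : k) + (q : k)))) •
            LaurentPolynomial.T (1 - p - q))
    (deriv : LaurentPolynomial k →ₗ[k] LaurentPolynomial k)
    (hderiv : ∀ n : ℤ,
      deriv (LaurentPolynomial.T n) = (n : k) • LaurentPolynomial.T (n - 1)) :
    ∀ u v : LaurentPolynomial k,
      qmul u v - qmul v u = u * deriv v - deriv u * v := by
  have key : ∀ m n : ℤ, qmul (LaurentPolynomial.T m) (LaurentPolynomial.T n)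
      - qmul (LaurentPolynomial.T n) (LaurentPolynomial.T m)
      = LaurentPolynomial.T m * deriv (LaurentPolynomial.T n)
        - deriv (LaurentPolynomial.T m) * LaurentPolynomial.T n := by
    intro m n
    obtain ⟨p, rfl⟩ : ∃ p, m = 1 - p := ⟨1 - m, by ring⟩
    obtain ⟨q, rfl⟩ : ∃ q, n = 1 - q := ⟨1 - n, by ring⟩
    rw [hqmul, hqmul, hderiv, hderiv, mul_smul_comm, smul_mul_assoc,
      ← LaurentPolynomial.T_add, ← LaurentPolynomial.T_add,
      show 1 - q - p = 1 - p - q by ring,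
      show 1 - p + (1 - q - 1) = 1 - p - q by ring,
      show 1 - p - 1 + (1 - q) = 1 - p - q by ring, ← sub_smul, ← sub_smul]
    congr 1
    have h := hε (p + q)
    push_cast at h ⊢
    rw [add_comm (q : k) (p : k)]
    field_simp
    ring
  intro u v
  induction u using LaurentPolynomial.induction_on' with
  | add f g hf hg =>
    simp only [map_add, LinearMap.add_apply, add_mul]
    linear_combination hf + hg
  | C_mul_T m a =>
    induction v using LaurentPolynomial.induction_on' with
    | add f g hf hg =>
      simp only [map_add, LinearMap.add_apply, mul_add]
      linear_combination hf + hg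
    | C_mul_T n b =>
      simp only [← LaurentPolynomial.smul_eq_C_mul, map_smul, LinearMap.smul_apply,
        mul_smul_comm, smul_mul_assoc]
      rw [smul_comm a b, ← smul_sub, ← smul_sub, key, ← smul_sub, ← smul_sub]
end

section
/- Let K be a commutative ring with a derivation ∂ : K → K, and let R be a quasiassociative algebra over K. Let Ω : R × R → K be a K-bilinear form which is a generalized quasiassociative 2-cocycle, i.e. Ω(v, u*w) − Ω(u, v*w) + Ω([u,v], w) ∈ Im ∂ for all u, v, w ∈ R, where [u,v] = u*v − v*u. Then ω(u,v) := Ω(u,v) − Ω(v,u) satisfies ω([u,v], w) + ω([v,w], u) + ω([w,u], v) ∈ Im ∂ for all u, v, w ∈ R; that is, ω is a generalized 2-cocycle on the Lie algebra Lie(R). -/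
/-- if `Ω` is a generalized quasiassociative 2-cocycle on a differential
quasiassociative algebra `R` (i.e. the cocycle condition holds modulo `Im ∂`), then
`ω(u,v) = Ω(u,v) − Ω(v,u)` is a generalized 2-cocycle on the Lie algebra `Lie(R)`. -/
theorem stmt13 {K R : Type*} [CommRing K] [AddCommGroup R] [Module K R]
    (d : K → K)
    (hadd : ∀ a b : K, d (a + b) = d a + d b)
    (hleibniz : ∀ a b : K, d (a * b) = a * d b + d a * b)
    (mul : R →ₗ[K] R →ₗ[K] R)
    (hquasi : ∀ a b c : R,
      mul a (mul b c) - mul (mul a b) c = mul b (mul a c) - mul (mul b a) c)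
    (Ω : R →ₗ[K] R →ₗ[K] K)
    (hΩ : ∀ u v w : R,
      Ω v (mul u w) - Ω u (mul v w) + Ω (mul u v - mul v u) w ∈ Set.range d) :
    ∀ u v w : R,
      (Ω (mul u v - mul v u) w - Ω w (mul u v - mul v u)) +
      (Ω (mul v w - mul w v) u - Ω u (mul v w - mul w v)) +
      (Ω (mul w u - mul u w) v - Ω v (mul w u - mul u w)) ∈ Set.range d := by
  intro u v w
  obtain ⟨a, ha⟩ := hΩ u v w
  obtain ⟨b, hb⟩ := hΩ v w u
  obtain ⟨c, hc⟩ := hΩ w u v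
  refine ⟨a + b + c, ?_⟩
  rw [hadd, hadd, ha, hb, hc]
  simp only [map_sub, LinearMap.sub_apply]
  ring
end

section
/- Let K be a commutative ring and R a quasiassociative algebra over K. Let M = Hom_K(R, K) be the dual module, and define a left action of R on M by (x • ȳ)(y) = −ȳ(x * y) for x, y ∈ R, ȳ ∈ M. Then the multiplication on T*R = R ⊕ M given by (x, x̄) * (y, ȳ) = (x*y, x • ȳ) is quasiassociative: A*(B*C) − (A*B)*C = B*(A*C) − (B*A)*C for all A, B, C ∈ T*R. -/
/-- The phase-space multiplication on `T*R = R ⊕ Hom_K(R,K)`: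
`(x, x̄) * (y, ȳ) = (x*y, x • ȳ)` with `(x • ȳ)(z) = −ȳ(x*z)`. -/
def phaseMul {K R : Type*} [CommRing K] [AddCommGroup R] [Module K R]
    (mul : R →ₗ[K] R →ₗ[K] R)
    (A B : R × (R →ₗ[K] K)) : R × (R →ₗ[K] K) :=
  (mul A.1 B.1, -(B.2 ∘ₗ mul A.1))

/-- the phase-space extension `T*R` of a quasiassociative algebra `R`
is again quasiassociative. -/
theorem stmt14 {K R : Type*} [CommRing K] [AddCommGroup R] [Module K R]
    (mul : R →ₗ[K] R →ₗ[K] R)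
    (hquasi : ∀ a b c : R,
      mul a (mul b c) - mul (mul a b) c = mul b (mul a c) - mul (mul b a) c) :
    ∀ A B C : R × (R →ₗ[K] K),
      phaseMul mul A (phaseMul mul B C) - phaseMul mul (phaseMul mul A B) C
        = phaseMul mul B (phaseMul mul A C) - phaseMul mul (phaseMul mul B A) C := by
  rintro ⟨a, a'⟩ ⟨b, b'⟩ ⟨c, c'⟩
  refine Prod.ext ?_ ?_
  · exact hquasi a b c
  · refine LinearMap.ext fun z => ?_
    have h := congrArg c' (hquasi a b z)
    simp only [map_sub] at h
    simp only [phaseMul, Prod.snd_sub, LinearMap.sub_apply, LinearMap.neg_apply,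
      LinearMap.comp_apply]
    linear_combination -h
end

section
/- Let K be a commutative ring, and let R and U be quasiassociative algebras over K. Let χ : R → End_K(U) be a K-linear map such that (i) each χ(a) is a derivation of (U, *): χ(a)(u*v) = χ(a)(u)*v + u*χ(a)(v), and (ii) χ is a representation of the Lie algebra Lie(R): χ(a)∘χ(b) − χ(b)∘χ(a) = χ(a*b − b*a) for all a, b ∈ R. Write a.v for χ(a)(v). Then the semidirect-sum multiplication on R ⊕ U defined by (a, u) * (b, v) = (a*b, a.v + u*v) is quasiassociative. -/
/-- The semidirect-sum multiplication on `R ⊕ U`: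
`(a, u) * (b, v) = (a*b, a.v + u*v)`. -/
def sdMul {K R U : Type*} [CommRing K] [AddCommGroup R] [Module K R]
    [AddCommGroup U] [Module K U]
    (mulR : R →ₗ[K] R →ₗ[K] R) (mulU : U →ₗ[K] U →ₗ[K] U)
    (χ : R →ₗ[K] Module.End K U)
    (A B : R × U) : R × U :=
  (mulR A.1 B.1, χ A.1 B.2 + mulU A.2 B.2)

/-- if `R`, `U` are quasiassociative, every `χ(a)` is a derivation of
`(U,*)`, and `χ` is a representation of the Lie algebra `Lie(R)`, then the
semidirect-sum multiplication on `R ⊕ U` is quasiassociative. -/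
theorem stmt17 {K R U : Type*} [CommRing K] [AddCommGroup R] [Module K R]
    [AddCommGroup U] [Module K U]
    (mulR : R →ₗ[K] R →ₗ[K] R)
    (hquasiR : ∀ a b c : R,
      mulR a (mulR b c) - mulR (mulR a b) c = mulR b (mulR a c) - mulR (mulR b a) c)
    (mulU : U →ₗ[K] U →ₗ[K] U)
    (hquasiU : ∀ u v w : U,
      mulU u (mulU v w) - mulU (mulU u v) w = mulU v (mulU u w) - mulU (mulU v u) w)
    (χ : R →ₗ[K] Module.End K U)
    (hder : ∀ (a : R) (u v : U),
      χ a (mulU u v) = mulU (χ a u) v + mulU u (χ a v))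
    (hrep : ∀ a b : R, χ a * χ b - χ b * χ a = χ (mulR a b - mulR b a)) :
    ∀ A B C : R × U,
      sdMul mulR mulU χ A (sdMul mulR mulU χ B C)
          - sdMul mulR mulU χ (sdMul mulR mulU χ A B) C
        = sdMul mulR mulU χ B (sdMul mulR mulU χ A C)
          - sdMul mulR mulU χ (sdMul mulR mulU χ B A) C := by
  rintro ⟨a, u⟩ ⟨b, v⟩ ⟨c, w⟩
  have h1 := hquasiU u v w
  have h2 := LinearMap.congr_fun (hrep a b) w
  simp only [map_sub, LinearMap.sub_apply, Module.End.mul_apply] at h2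
  refine Prod.ext (hquasiR a b c) ?_
  simp only [sdMul, Prod.snd_sub, map_add, LinearMap.add_apply, hder]
  rw [← sub_eq_zero] at h1 h2 ⊢
  rw [← add_zero (0 : U)]
  nth_rewrite 1 [← h1]
  rw [← h2]
  abel
end

section
/- Let K be a commutative ring and U a quasiassociative algebra over K. Suppose that for every u ∈ U the map ad_u : U → U, ad_u(v) = u*v − v*u, is a derivation of (U, *), i.e. ad_u(v*w) = ad_u(v)*w + v*ad_u(w) for all v, w ∈ U. Then U is associative: u*(v*w) = (u*v)*w for all u, v, w ∈ U. -/
/-- if `U` is a quasiassociative algebra in which every inner map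
`ad_u(v) = u*v − v*u` is a derivation of `(U, *)`, then `U` is associative. -/
theorem stmt18 {K U : Type*} [CommRing K] [AddCommGroup U] [Module K U]
    (mul : U →ₗ[K] U →ₗ[K] U)
    (hquasi : ∀ a b c : U,
      mul a (mul b c) - mul (mul a b) c = mul b (mul a c) - mul (mul b a) c)
    (had : ∀ u v w : U,
      mul u (mul v w) - mul (mul v w) u
        = mul (mul u v - mul v u) w + mul v (mul u w - mul w u)) :
    ∀ u v w : U, mul u (mul v w) = mul (mul u v) w := by
  intro u v w
  have h1 := had w u v
  have h2 := hquasi w u v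
  simp only [map_sub, LinearMap.sub_apply] at h1
  rw [← sub_eq_zero] at h1 h2 ⊢
  have h3 := congrArg₂ (· - ·) h1 h2
  simp only [sub_zero] at h3
  rw [← h3]
  abel
end

section
/- Let K be a commutative ring, C a commutative K-algebra, n a natural number, and θ : Fin n × Fin n × Fin n → K structure constants θ^s_{ij} satisfying the quasiassociativity relation Σ_s (θ^s_{jk}θ^r_{is} − θ^s_{ik}θ^r_{js}) = Σ_s (θ^s_{ij} − θ^s_{ji})·θ^r_{sk} for all i, j, k, r ∈ Fin n. Let d₁, …, dₙ : C → C be K-linear derivations of C satisfying dᵢ∘dⱼ − dⱼ∘dᵢ = Σ_s (θ^s_{ij} − θ^s_{ji})·d_s for all i, j. Define a multiplication on the C-module Cⁿ of n-tuples X = (X¹,…,Xⁿ) by (X * Y)^r = Σ_α X^α·d_α(Y^r) + Σ_{α,β} θ^r_{αβ}·X^α·Y^β. Then this multiplication is quasiassociative: X*(Y*Z) − (X*Y)*Z = Y*(X*Z) − (Y*X)*Z for all X, Y, Z ∈ Cⁿ; moreover its commutator is (X*Y − Y*X)^r = Σ_α [X^α d_α(Y^r) − Y^α d_α(X^r)]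 + Σ_{α,β} (θ^r_{αβ} − θ^r_{βα}) X^α Y^β. -/
/-- The multiplication `(X * Y)^r = Σ_α X^α d_α(Y^r) + Σ_{α,β} θ^r_{αβ} X^α Y^β` on
`Cⁿ`, modelling vector fields on a Lie group in a frame of left-invariant vector
fields. Here `θ r α β` is the structure constant `θ^r_{αβ}`. -/
def frameMul {K C : Type*} [CommRing K] [CommRing C] [Algebra K C] {n : ℕ}
    (θ : Fin n → Fin n → Fin n → K) (d : Fin n → Derivation K C C)
    (X Y : Fin n → C) : Fin n → C :=
  fun r => (∑ α, X α * d α (Y r)) + ∑ α, ∑ β, θ r α β • (X α * Y β)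

/-- covariant derivative in the frame -/
def covD {K C : Type*} [CommRing K] [CommRing C] [Algebra K C] {n : ℕ}
    (θ : Fin n → Fin n → Fin n → K) (d : Fin n → Derivation K C C)
    (a : Fin n) (Z : Fin n → C) (r : Fin n) : C :=
  d a (Z r) + ∑ b, algebraMap K C (θ r a b) * Z b

theorem frameMul_eq_covD {K C : Type*} [CommRing K] [CommRing C] [Algebra K C] {n : ℕ}
    (θ : Fin n → Fin n → Fin n → K) (d : Fin n → Derivation K C C)
    (X Y : Fin n → C) (r : Fin n) :
    frameMul θ d X Y r = ∑ a, X a * covD θ d a Y r := by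
  simp only [frameMul, covD, ← Finset.sum_add_distrib, mul_add, Finset.mul_sum, Algebra.smul_def]
  refine Finset.sum_congr rfl fun a _ => ?_
  congr 1
  exact Finset.sum_congr rfl fun b _ => by ring

theorem covD_covD {K C : Type*} [CommRing K] [CommRing C] [Algebra K C] {n : ℕ}
    (θ : Fin n → Fin n → Fin n → K) (d : Fin n → Derivation K C C)
    (a b : Fin n) (Z : Fin n → C) (r : Fin n) :
    covD θ d a (covD θ d b Z) r = d a (d b (Z r))
      + ∑ g, algebraMap K C (θ r b g) * d a (Z g)
      + ∑ g, algebraMap K C (θ r a g) * d b (Z g)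
      + ∑ g, algebraMap K C (∑ s, θ s b g * θ r a s) * Z g := by
  have h : ∑ g, algebraMap K C (∑ s, θ s b g * θ r a s) * Z g
      = ∑ s, ∑ g, algebraMap K C (θ r a s) * (algebraMap K C (θ s b g) * Z g) := by
    rw [Finset.sum_comm]
    refine Finset.sum_congr rfl fun g _ => ?_
    rw [map_sum, Finset.sum_mul]
    refine Finset.sum_congr rfl fun s _ => ?_
    rw [map_mul]; ring
  rw [h]
  simp only [covD, map_add, map_sum, Derivation.leibniz, Derivation.map_algebraMap, mul_zero, Finset.sum_const_zero,
    add_zero, smul_eq_mul, mul_add, Finset.sum_add_distrib, Finset.mul_sum]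
  ring

theorem covD_flat {K C : Type*} [CommRing K] [CommRing C] [Algebra K C] {n : ℕ}
    (θ : Fin n → Fin n → Fin n → K) (d : Fin n → Derivation K C C)
    (hθ : ∀ i j k r : Fin n,
      ∑ s, (θ s j k * θ r i s - θ s i k * θ r j s)
        = ∑ s, (θ s i j - θ s j i) * θ r s k)
    (hd : ∀ (i j : Fin n) (c : C),
      d i (d j c) - d j (d i c) = ∑ s, (θ s i j - θ s j i) • d s c)
    (a b : Fin n) (Z : Fin n → C) (r : Fin n) :
    covD θ d a (covD θ d b Z) r - covD θ d b (covD θ d a Z) r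
      = ∑ s, algebraMap K C (θ s a b - θ s b a) * covD θ d s Z r := by
  have h1 : (∑ g, algebraMap K C (∑ s, θ s b g * θ r a s) * Z g)
      - ∑ g, algebraMap K C (∑ s, θ s a g * θ r b s) * Z g
      = ∑ s, algebraMap K C (θ s a b - θ s b a) * ∑ g, algebraMap K C (θ r s g) * Z g := by
    simp only [Finset.mul_sum]
    rw [← Finset.sum_sub_distrib, Finset.sum_comm]
    refine Finset.sum_congr rfl fun g _ => ?_
    rw [← sub_mul, ← map_sub, ← Finset.sum_sub_distrib, hθ, map_sum, Finset.sum_mul]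
    refine Finset.sum_congr rfl fun s _ => ?_
    rw [map_mul]; ring
  have h2 := hd a b (Z r)
  simp only [Algebra.smul_def] at h2
  rw [covD_covD, covD_covD]
  have h3 : ∑ s, algebraMap K C (θ s a b - θ s b a) * covD θ d s Z r
      = ∑ s, algebraMap K C (θ s a b - θ s b a) * d s (Z r)
        + ∑ s, algebraMap K C (θ s a b - θ s b a) * ∑ g, algebraMap K C (θ r s g) * Z g := by
    simp only [covD, mul_add, Finset.sum_add_distrib]
  rw [h3]
  linear_combination h1 + h2

theorem frameMul_assoc_eq {K C : Type*} [CommRing K] [CommRing C] [Algebra K C] {n : ℕ}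
    (θ : Fin n → Fin n → Fin n → K) (d : Fin n → Derivation K C C)
    (X Y Z : Fin n → C) (r : Fin n) :
    frameMul θ d X (frameMul θ d Y Z) r - frameMul θ d (frameMul θ d X Y) Z r
      = ∑ a, ∑ b, X a * Y b * (covD θ d a (covD θ d b Z) r
          - ∑ s, algebraMap K C (θ s a b) * covD θ d s Z r) := by
  have e : ∀ a, covD θ d a (frameMul θ d Y Z) r
      = ∑ b, (d a (Y b) * covD θ d b Z r + Y b * covD θ d a (covD θ d b Z) r) := by
    intro a
    conv_lhs => unfold covD
    simp only [frameMul_eq_covD, map_sum, Derivation.leibniz, smul_eq_mul, Finset.mul_sum]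
    rw [Finset.sum_comm, ← Finset.sum_add_distrib]
    refine Finset.sum_congr rfl fun b _ => ?_
    conv_rhs => rw [covD.eq_def θ d a (covD θ d b Z) r]
    have : ∑ x, algebraMap K C (θ r a x) * (Y b * covD θ d b Z x)
        = Y b * ∑ x, algebraMap K C (θ r a x) * covD θ d b Z x := by
      rw [Finset.mul_sum]
      exact Finset.sum_congr rfl fun x _ => by ring
    rw [this]; ring
  have e2 : frameMul θ d (frameMul θ d X Y) Z r
      = ∑ a, (∑ s, X a * d a (Y s) * covD θ d s Z r
        + ∑ b, ∑ s, X a * Y b * (algebraMap K C (θ s a b) * covD θ d s Z r)) := by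
    rw [frameMul_eq_covD]
    simp only [frameMul_eq_covD, Finset.sum_mul]
    rw [Finset.sum_comm]
    refine Finset.sum_congr rfl fun a _ => ?_
    rw [Finset.sum_comm (f := fun b s => X a * Y b * (algebraMap K C (θ s a b) * covD θ d s Z r)),
      ← Finset.sum_add_distrib]
    refine Finset.sum_congr rfl fun s _ => ?_
    rw [covD.eq_def θ d a Y s, mul_add, add_mul, Finset.mul_sum, Finset.sum_mul]
    congr 1
    exact Finset.sum_congr rfl fun b _ => by ring
  rw [e2, frameMul_eq_covD, ← Finset.sum_sub_distrib]
  refine Finset.sum_congr rfl fun a _ => ?_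
  rw [e, Finset.mul_sum, sub_add_eq_sub_sub, ← Finset.sum_sub_distrib, ← Finset.sum_sub_distrib]
  refine Finset.sum_congr rfl fun b _ => ?_
  rw [← Finset.mul_sum]
  ring

/-- if the structure constants `θ` satisfy the quasiassociativity
relation and the derivations `dᵢ` satisfy `[dᵢ,dⱼ] = Σ_s (θ^s_{ij} − θ^s_{ji}) d_s`,
then `frameMul` is quasiassociative and its commutator is
`Σ_α (X^α d_α(Y^r) − Y^α d_α(X^r)) + Σ_{α,β} (θ^r_{αβ} − θ^r_{βα}) X^α Y^β`. -/
theorem stmt19 {K C : Type*} [CommRing K] [CommRing C] [Algebra K C] {n : ℕ}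
    (θ : Fin n → Fin n → Fin n → K) (d : Fin n → Derivation K C C)
    (hθ : ∀ i j k r : Fin n,
      ∑ s, (θ s j k * θ r i s - θ s i k * θ r j s)
        = ∑ s, (θ s i j - θ s j i) * θ r s k)
    (hd : ∀ (i j : Fin n) (c : C),
      d i (d j c) - d j (d i c) = ∑ s, (θ s i j - θ s j i) • d s c) :
    (∀ X Y Z : Fin n → C,
      frameMul θ d X (frameMul θ d Y Z) - frameMul θ d (frameMul θ d X Y) Z
        = frameMul θ d Y (frameMul θ d X Z) - frameMul θ d (frameMul θ d Y X) Z) ∧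
    (∀ (X Y : Fin n → C) (r : Fin n),
      frameMul θ d X Y r - frameMul θ d Y X r
        = (∑ α, (X α * d α (Y r) - Y α * d α (X r)))
          + ∑ α, ∑ β, (θ r α β - θ r β α) • (X α * Y β)) := by
  refine ⟨fun X Y Z => ?_, fun X Y r => ?_⟩
  · funext r
    simp only [Pi.sub_apply]
    rw [frameMul_assoc_eq, frameMul_assoc_eq, Finset.sum_comm]
    refine Finset.sum_congr rfl fun b _ => Finset.sum_congr rfl fun a _ => ?_
    have h := covD_flat θ d hθ hd a b Z r
    simp only [map_sub, sub_mul, Finset.sum_sub_distrib] at h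
    linear_combination X a * Y b * h
  · have h : ∑ α, ∑ β, θ r α β • (Y α * X β) = ∑ α, ∑ β, θ r β α • (X α * Y β) := by
      rw [Finset.sum_comm]
      exact Finset.sum_congr rfl fun a _ => Finset.sum_congr rfl fun b _ => by rw [mul_comm]
    simp only [frameMul, sub_smul, Finset.sum_sub_distrib]
    rw [h]
    ring
end
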